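/- Let X be a regular Hausdorff (T3) topological space and let κ be an infinite cardinal. Assume that X is almost discretely Lindelöf and that every point of X has a neighborhood basis of cardinality at most κ. Then the cardinality of X is at most 2^κ. -/

import Mathlib

open Cardinal Set Filter Topology

/-- A topological space is *almost discretely Lindelöf* if every subset that is
discrete in the subspace topology is contained in a Lindelöf subspace. -/
def AlmostDiscretelyLindelof (X : Type*) [TopologicalSpace X] : Prop :=
  ∀ D : Set X, DiscreteTopology D → ∃ Y : Set X, D ⊆ Y ∧ IsLindelof Y

/-!
Close off under three operations on sets `A` of size at most `κ`: topological closure, a discrete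
set supplied by Shapirovskii's lemma outside `closure A`, and a choice of a point in each nonempty
intersection of closures of basic neighbourhoods centred in `A`. The resulting closed set `F` has
at most `2 ^ κ` points, because a discrete set lies in a Lindelöf subspace, whose size is bounded by
Arhangel'skii's theorem. If some `p` were outside `F`, then every small `A ⊆ F` could be separated
from `p` by the closure of a basic neighbourhood centred in `F`, and recursion would produce a free
sequence of length `κ⁺` in `F`. Such a sequence is discrete, so it lies in a Lindelöf subspace; but
its closed tails have empty intersection while any countably many of them have a common point of
the sequence.
-/

universe u

section Cardinality

variable {α ι W : Type u} {κ : Cardinal.{u}}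

theorem mk_biUnion_le_of_forall_mk_le (hκ : ℵ₀ ≤ κ) {S : Set ι} {f : ι → Set α} (hS : #S ≤ κ)
    (hf : ∀ i ∈ S, #(f i) ≤ κ) : #(⋃ i ∈ S, f i) ≤ κ :=
  calc
    #(⋃ i ∈ S, f i) ≤ #S * ⨆ i : S, #(f i) := mk_biUnion_le f S
    _ ≤ κ * κ := mul_le_mul' hS (ciSup_le' fun i => hf i i.2)
    _ = κ := mul_eq_self hκ

theorem two_power_power_self (hκ : ℵ₀ ≤ κ) : ((2 : Cardinal) ^ κ) ^ κ = 2 ^ κ := by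
  rw [← power_mul, mul_eq_self hκ]

theorem aleph0_le_two_power (hκ : ℵ₀ ≤ κ) : ℵ₀ ≤ (2 : Cardinal) ^ κ :=
  hκ.trans (cantor κ).le

theorem mk_setOf_subset_and_mk_le (hκ : ℵ₀ ≤ κ) {G : Set α} (hG : #G ≤ 2 ^ κ) :
    #{A : Set α | A ⊆ G ∧ #A ≤ κ} ≤ 2 ^ κ :=
  calc
    #{A : Set α | A ⊆ G ∧ #A ≤ κ} ≤ max #G ℵ₀ ^ κ := mk_bounded_subset_le G κ
    _ ≤ (2 ^ κ) ^ κ := power_le_power_right (max_le hG (aleph0_le_two_power hκ))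
    _ = 2 ^ κ := two_power_power_self hκ

theorem exists_mk_le_forall_inter_nonempty (𝒮 : Set (Set α)) :
    ∃ T : Set α, #T ≤ #𝒮 ∧ ∀ S ∈ 𝒮, S.Nonempty → (S ∩ T).Nonempty := by
  let point : {S : 𝒮 // S.1.Nonempty} → α := fun S => S.2.some
  refine ⟨range point, mk_range_le.trans (mk_subtype_le _), fun S hS hne => ?_⟩
  exact ⟨hne.some, hne.some_mem, ⟨⟨S, hS⟩, hne⟩, rfl⟩

theorem exists_forall_mem_lt_of_mk_lt_cof [LinearOrder W] {S : Set W} (hS : #S < Order.cof W) :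
    ∃ w, ∀ v ∈ S, v < w :=
  not_isCofinal_iff.1 fun h => (Order.cof_le h).not_gt hS

theorem exists_subset_biUnion_Iio_of_mk_lt_cof [LinearOrder W] {H : W → Set α} {A : Set α}
    (hA : #A < Order.cof W) (hAH : A ⊆ ⋃ w, H w) : ∃ w, A ⊆ ⋃ v ∈ Iio w, H v := by
  have hindex (a : A) : ∃ w, a.1 ∈ H w := mem_iUnion.1 (hAH a.2)
  choose index hindex using hindex
  obtain ⟨w, hw⟩ := exists_forall_mem_lt_of_mk_lt_cof
    ((mk_range_le (f := index)).trans_lt hA)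
  exact ⟨w, fun a ha => mem_biUnion (hw _ ⟨⟨a, ha⟩, rfl⟩) (hindex ⟨a, ha⟩)⟩

theorem mk_Iio_toType_ord_succ_le (w : (Order.succ κ).ord.ToType) : #(Iio w) ≤ κ := by
  have hlt := mk_Iio_lt w (by simp)
  rwa [mk_ord_toType, Order.lt_succ_iff] at hlt

theorem lt_cof_toType_ord_succ (hκ : ℵ₀ ≤ κ) : κ < Order.cof (Order.succ κ).ord.ToType := by
  rw [Ordinal.cof_toType, (isRegular_succ hκ).cof_ord]
  exact Order.lt_succ κ

end Cardinality

section TransfiniteRecursion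

theorem exists_set_forall_mem_iff_inter_Iio {W : Type*} [Preorder W] [WellFoundedLT W]
    (R : Set W → W → Prop) : ∃ D : Set W, ∀ w, w ∈ D ↔ R (D ∩ Iio w) w := by
  let step (w : W) (earlier : ∀ v, v < w → Prop) : Prop := R {v | ∃ h : v < w, earlier v h} w
  refine ⟨{w | wellFounded_lt.fix step w}, fun w => ?_⟩
  have hstep : wellFounded_lt.fix step w = R {v | ∃ _ : v < w, wellFounded_lt.fix step v} w :=
    wellFounded_lt.fix_eq step w
  have hearlier : {v | ∃ _ : v < w, wellFounded_lt.fix step v} =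
      {v | wellFounded_lt.fix step v} ∩ Iio w := by
    ext v
    exact exists_prop.trans and_comm
  exact (hstep.trans (congrArg (R · w) hearlier)).to_iff

variable {Y W : Type u} {κ : Cardinal.{u}} [Preorder W] [WellFoundedLT W]

theorem exists_seq_forall_rel_image_Iio (hW : ∀ w : W, #(Iio w) ≤ κ) {T : Set Y}
    {R : Set Y → Y → Prop} (hR : ∀ S ⊆ T, #S ≤ κ → ∃ y ∈ T, R S y) :
    ∃ s : W → Y, ∀ w, s w ∈ T ∧ R (s '' Iio w) (s w) := by
  have : Nonempty Y := (hR ∅ (empty_subset T) (by simp)).nonempty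
  choose! next hnextT hnextR using hR
  let step (w : W) (earlier : ∀ v, v < w → Y) : Y := next (range fun v : Iio w => earlier v v.2)
  let s : W → Y := wellFounded_lt.fix step
  have hs (w : W) : s w = next (s '' Iio w) := by
    rw [image_eq_range]
    exact wellFounded_lt.fix_eq step w
  have hsmall (w : W) : #(s '' Iio w) ≤ κ := mk_image_le.trans (hW w)
  have hsT (w : W) : s w ∈ T := by
    induction w using WellFoundedLT.induction with
    | _ w ih => exact hs w ▸ hnextT _ (image_subset_iff.2 ih) (hsmall w)
  refine ⟨s, fun w => ⟨hsT w, ?_⟩⟩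
  have hrel := hnextR _ (image_subset_iff.2 fun v _ => hsT v) (hsmall w)
  rwa [← hs w] at hrel

end TransfiniteRecursion

theorem exists_mk_le_two_power_closed_off {α : Type u} {κ : Cardinal.{u}} (hκ : ℵ₀ ≤ κ)
    {Φ : Set α → Set α} (hΦ : ∀ A : Set α, #A ≤ κ → #(Φ A) ≤ 2 ^ κ) :
    ∃ F : Set α, #F ≤ 2 ^ κ ∧ ∀ A ⊆ F, #A ≤ κ → Φ A ⊆ F := by
  have hstep (𝒮 : Set (Set α)) (h𝒮 : 𝒮 ⊆ {H | #H ≤ 2 ^ κ}) (h𝒮κ : #𝒮 ≤ κ) :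
      ∃ H ∈ {H : Set α | #H ≤ 2 ^ κ}, ∀ A ⊆ ⋃₀ 𝒮, #A ≤ κ → Φ A ⊆ H := by
    have hunion : #(⋃₀ 𝒮) ≤ 2 ^ κ := by
      rw [sUnion_eq_biUnion]
      exact mk_biUnion_le_of_forall_mk_le (aleph0_le_two_power hκ)
        (h𝒮κ.trans (cantor κ).le) h𝒮
    refine ⟨⋃ A ∈ {A | A ⊆ ⋃₀ 𝒮 ∧ #A ≤ κ}, Φ A, ?_, fun A hA hAκ => ?_⟩
    · exact mk_biUnion_le_of_forall_mk_le (aleph0_le_two_power hκ)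
        (mk_setOf_subset_and_mk_le hκ hunion) fun A hA => hΦ A hA.2
    · exact subset_biUnion_of_mem (u := Φ) ⟨hA, hAκ⟩
  obtain ⟨H, hH⟩ := exists_seq_forall_rel_image_Iio mk_Iio_toType_ord_succ_le hstep
  refine ⟨⋃ w, H w, ?_, fun A hA hAκ => ?_⟩
  · rw [← biUnion_univ]
    refine mk_biUnion_le_of_forall_mk_le (aleph0_le_two_power hκ) ?_ fun w _ => (hH w).1
    rw [mk_univ, mk_ord_toType]
    exact Order.succ_le_of_lt (cantor κ)
  · obtain ⟨w, hw⟩ := exists_subset_biUnion_Iio_of_mk_lt_cof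
      (hAκ.trans_lt (lt_cof_toType_ord_succ hκ)) hA
    rw [← sUnion_image] at hw
    exact ((hH w).2 A hw hAκ).trans (subset_iUnion H w)

/-- The character of `X` is at most `κ`: every point has a neighbourhood basis with at most `κ`
members. -/
def CharacterLE (X : Type u) [TopologicalSpace X] (κ : Cardinal.{u}) : Prop :=
  ∀ x : X, ∃ B : Set (Set X), #B ≤ κ ∧ (𝓝 x).HasBasis (· ∈ B) id

namespace CharacterLE

variable {X : Type u} [TopologicalSpace X] {κ : Cardinal.{u}}

theorem subtype (hX : CharacterLE X κ) (Y : Set X) : CharacterLE Y κ := by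
  intro y
  obtain ⟨B, hBκ, hB⟩ := hX y
  refine ⟨preimage Subtype.val '' B, mk_image_le.trans hBκ, ?_⟩
  rw [nhds_subtype]
  refine (hB.comap Subtype.val).to_hasBasis (fun V hV => ?_) ?_
  · exact ⟨_, mem_image_of_mem _ hV, Subset.rfl⟩
  · rintro _ ⟨V, hV, rfl⟩
    exact ⟨V, hV, Subset.rfl⟩

theorem exists_subset_mk_le_mem_closure (hX : CharacterLE X κ) {S : Set X} {x : X}
    (hx : x ∈ closure S) : ∃ A ⊆ S, #A ≤ κ ∧ x ∈ closure A := by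
  obtain ⟨B, hBκ, hB⟩ := hX x
  have hmeet (V : B) : ∃ y ∈ S, y ∈ V.1 := (mem_closure_iff_nhds_basis hB).1 hx V V.2
  choose y hyS hyV using hmeet
  refine ⟨range y, range_subset_iff.2 hyS, mk_range_le.trans hBκ, ?_⟩
  exact (mem_closure_iff_nhds_basis hB).2 fun V hV => ⟨y ⟨V, hV⟩, mem_range_self _, hyV ⟨V, hV⟩⟩

theorem isClosed_of_forall_closure_subset (hX : CharacterLE X κ) {F : Set X}
    (hF : ∀ A ⊆ F, #A ≤ κ → closure A ⊆ F) : IsClosed F := by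
  refine isClosed_of_closure_subset fun x hx => ?_
  obtain ⟨A, hAF, hAκ, hxA⟩ := hX.exists_subset_mk_le_mem_closure hx
  exact hF A hAF hAκ hxA

end CharacterLE

theorem injOn_nhdsWithin_closure {X : Type*} [TopologicalSpace X] [T2Space X] (A : Set X) :
    InjOn (fun x => 𝓝[A] x) (closure A) := by
  intro x hx y _ hxy
  have : (𝓝[A] x).NeBot := mem_closure_iff_nhdsWithin_neBot.1 hx
  have hle : 𝓝[A] x ≤ 𝓝 x ⊓ 𝓝 y :=
    le_inf nhdsWithin_le_nhds ((show 𝓝[A] x = 𝓝[A] y from hxy) ▸ nhdsWithin_le_nhds)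
  have : (𝓝 x ⊓ 𝓝 y).NeBot := NeBot.mono this hle
  exact eq_of_nhds_neBot this

namespace CharacterLE

variable {X : Type u} [TopologicalSpace X] {κ : Cardinal.{u}}

theorem mk_closure_le_two_power [T2Space X] (hX : CharacterLE X κ) (hκ : ℵ₀ ≤ κ) {A : Set X}
    (hA : #A ≤ κ) : #(closure A) ≤ 2 ^ κ := by
  choose B hBκ hB using hX
  let trace (x : X) : Set (Set X) := (· ∩ A) '' B x
  have htrace_basis (x : X) : (𝓝[A] x).HasBasis (· ∈ trace x) id := by
    refine (nhdsWithin_hasBasis (hB x) A).to_hasBasis (fun V hV => ?_) ?_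
    · exact ⟨_, mem_image_of_mem _ hV, Subset.rfl⟩
    · rintro _ ⟨V, hV, rfl⟩
      exact ⟨V, hV, Subset.rfl⟩
  have htrace_injOn : InjOn trace (closure A) := by
    intro x hx y hy hxy
    refine injOn_nhdsWithin_closure A hx hy ((htrace_basis x).eq_of_same_basis ?_)
    exact hxy ▸ htrace_basis y
  have htrace_mem (x : X) : trace x ∈ {𝒯 : Set (Set X) | 𝒯 ⊆ 𝒫 A ∧ #𝒯 ≤ κ} :=
    ⟨image_subset_iff.2 fun _ _ => inter_subset_right, mk_image_le.trans (hBκ x)⟩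
  have hpowerset : #(𝒫 A) ≤ 2 ^ κ := by
    rw [mk_powerset]
    exact power_le_power_left two_ne_zero hA
  calc
    #(closure A) = #(trace '' closure A) := (mk_image_eq_of_injOn _ _ htrace_injOn).symm
    _ ≤ #{𝒯 : Set (Set X) | 𝒯 ⊆ 𝒫 A ∧ #𝒯 ≤ κ} :=
      mk_le_mk_of_subset (image_subset_iff.2 fun x _ => htrace_mem x)
    _ ≤ 2 ^ κ := mk_setOf_subset_and_mk_le hκ hpowerset

end CharacterLE

theorem exists_subset_mk_le_subset_biUnion {α β : Type u} {κ : Cardinal.{u}} {F : Set α}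
    {𝒞 : α → Set β} {𝒱 : Set β} (h𝒱κ : #𝒱 ≤ κ) (h𝒱 : 𝒱 ⊆ ⋃ x ∈ F, 𝒞 x) :
    ∃ A ⊆ F, #A ≤ κ ∧ 𝒱 ⊆ ⋃ x ∈ A, 𝒞 x := by
  have hcentre (V : 𝒱) : ∃ x ∈ F, V.1 ∈ 𝒞 x := by simpa using h𝒱 V.2
  choose centre hcentreF hcentre using hcentre
  exact ⟨range centre, range_subset_iff.2 hcentreF, mk_range_le.trans h𝒱κ,
    fun V hV => mem_biUnion (mem_range_self ⟨V, hV⟩) (hcentre ⟨V, hV⟩)⟩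

/-- `F` meets every nonempty intersection of at most `κ` sets taken from the families `𝒞 x` with
`x ∈ F`. In the closing-off arguments, `𝒞 x` is derived from a neighbourhood basis of `x`. -/
def ReflectsIntersections {α : Type u} (κ : Cardinal.{u}) (𝒞 : α → Set (Set α)) (F : Set α) :
    Prop :=
  ∀ 𝒱 ⊆ ⋃ x ∈ F, 𝒞 x, #𝒱 ≤ κ → (⋂₀ 𝒱).Nonempty → (⋂₀ 𝒱 ∩ F).Nonempty

theorem exists_reflectsIntersections_closed_off {α : Type u} {κ : Cardinal.{u}} (hκ : ℵ₀ ≤ κ)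
    {𝒞 : α → Set (Set α)} (h𝒞 : ∀ x, #(𝒞 x) ≤ κ) {Φ : Set α → Set α}
    (hΦ : ∀ A : Set α, #A ≤ κ → #(Φ A) ≤ 2 ^ κ) :
    ∃ F : Set α, #F ≤ 2 ^ κ ∧ ReflectsIntersections κ 𝒞 F ∧ ∀ A ⊆ F, #A ≤ κ → Φ A ⊆ F := by
  choose T hTcard hTmeet using fun A : Set α =>
    exists_mk_le_forall_inter_nonempty (sInter '' 𝒫 (⋃ x ∈ A, 𝒞 x))
  have hT (A : Set α) (hA : #A ≤ κ) : #(T A) ≤ 2 ^ κ :=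
    calc
      #(T A) ≤ #(𝒫 (⋃ x ∈ A, 𝒞 x)) := (hTcard A).trans mk_image_le
      _ = 2 ^ #(⋃ x ∈ A, 𝒞 x) := mk_powerset _
      _ ≤ 2 ^ κ := power_le_power_left two_ne_zero
        (mk_biUnion_le_of_forall_mk_le hκ hA fun x _ => h𝒞 x)
  obtain ⟨F, hFcard, hF⟩ := exists_mk_le_two_power_closed_off hκ (Φ := fun A => Φ A ∪ T A)
    fun A hA => (mk_union_le _ _).trans
      (add_le_of_le (aleph0_le_two_power hκ) (hΦ A hA) (hT A hA))
  refine ⟨F, hFcard, fun 𝒱 h𝒱 h𝒱κ hne => ?_,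
    fun A hA hAκ => subset_union_left.trans (hF A hA hAκ)⟩
  obtain ⟨A, hAF, hAκ, h𝒱A⟩ := exists_subset_mk_le_subset_biUnion h𝒱κ h𝒱
  have hmeet := hTmeet A (⋂₀ 𝒱) (mem_image_of_mem _ h𝒱A) hne
  exact hmeet.mono (inter_subset_inter_right _ (subset_union_right.trans (hF A hAF hAκ)))

namespace CharacterLE

variable {X : Type u} [TopologicalSpace X] {κ : Cardinal.{u}}

theorem exists_isClosed_reflectsIntersections_closed_off [T2Space X] (hX : CharacterLE X κ)
    (hκ : ℵ₀ ≤ κ) {𝒞 : X → Set (Set X)} (h𝒞 : ∀ x, #(𝒞 x) ≤ κ) {Φ : Set X → Set X}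
    (hΦ : ∀ A : Set X, #A ≤ κ → #(Φ A) ≤ 2 ^ κ) :
    ∃ F : Set X, IsClosed F ∧ #F ≤ 2 ^ κ ∧ ReflectsIntersections κ 𝒞 F ∧
      ∀ A ⊆ F, #A ≤ κ → Φ A ⊆ F := by
  obtain ⟨F, hFcard, hreflects, hF⟩ := exists_reflectsIntersections_closed_off hκ h𝒞
    (Φ := fun A => closure A ∪ Φ A) fun A hA => (mk_union_le _ _).trans
      (add_le_of_le (aleph0_le_two_power hκ) (hX.mk_closure_le_two_power hκ hA) (hΦ A hA))
  refine ⟨F, ?_, hFcard, hreflects, fun A hA hAκ => subset_union_right.trans (hF A hA hAκ)⟩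
  exact hX.isClosed_of_forall_closure_subset
    fun A hA hAκ => subset_union_left.trans (hF A hA hAκ)

/-- **Arhangel'skii's theorem**. -/
theorem mk_le_two_power_of_lindelofSpace [T2Space X] [LindelofSpace X] (hX : CharacterLE X κ)
    (hκ : ℵ₀ ≤ κ) : #X ≤ 2 ^ κ := by
  choose B hBκ hB using id hX
  obtain ⟨F, hFclosed, hFcard, hreflects, -⟩ :=
    hX.exists_isClosed_reflectsIntersections_closed_off hκ (𝒞 := fun x => compl '' B x)
      (fun x => mk_image_le.trans (hBκ x)) (Φ := fun _ => ∅) (by simp)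
  suffices hF : F = Set.univ by rwa [hF, mk_univ] at hFcard
  by_contra hne
  obtain ⟨p, hp⟩ := (ne_univ_iff_exists_notMem F).1 hne
  have havoid (x : X) (hx : x ∈ F) : ∃ V ∈ B x, p ∉ V := by
    have hxp : x ≠ p := ne_of_mem_of_not_mem hx hp
    obtain ⟨V, hV, hVp⟩ := (hB x).mem_iff.1 (compl_singleton_mem_nhds hxp)
    exact ⟨V, hV, fun hpV => hVp hpV rfl⟩
  choose! V hVB hpV using havoid
  obtain ⟨t, htcount, htF, hcover⟩ := hFclosed.isLindelof.elim_nhds_subcover V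
    fun x hx => (hB x).mem_of_mem (hVB x hx)
  obtain ⟨z, hz, hzF⟩ := hreflects ((fun x => (V x)ᶜ) '' t)
    (image_subset_iff.2 fun x hx => mem_biUnion (htF x hx) (mem_image_of_mem _ (hVB x (htF x hx))))
    (mk_image_le.trans ((mk_le_aleph0_iff.2 htcount.to_subtype).trans hκ))
    ⟨p, forall_mem_image.2 fun x hx => hpV x (htF x hx)⟩
  obtain ⟨x, hx, hzx⟩ := mem_iUnion₂.1 (hcover hzF)
  exact hz _ (mem_image_of_mem _ hx) hzx

end CharacterLE

/-- A free sequence: every initial segment and the complementary tail have disjoint closures. The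
length of the sequence is the order type of `W`. -/
def IsFreeSequence {X W : Type*} [TopologicalSpace X] [Preorder W] (x : W → X) : Prop :=
  ∀ w, Disjoint (closure (x '' Iio w)) (closure (x '' Ici w))

namespace IsFreeSequence

section Discrete

variable {X W : Type*} [TopologicalSpace X] {x : W → X}

theorem notMem_closure_image_Iio [Preorder W] (hx : IsFreeSequence x) (w : W) :
    x w ∉ closure (x '' Iio w) :=
  fun hw => (hx w).notMem_of_mem_left hw (subset_closure (mem_image_of_mem x self_mem_Ici))

variable [LinearOrder W] [WellFoundedLT W]

theorem notMem_closure_image_Ioi (hx : IsFreeSequence x) (w : W) : x w ∉ closure (x '' Ioi w) := by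
  let := SuccOrder.ofLinearWellFoundedLT W
  by_cases hmax : IsMax w
  · simp [hmax.Ioi_eq]
  · rw [← Order.Ici_succ_of_not_isMax hmax]
    exact (hx (Order.succ w)).notMem_of_mem_left
      (subset_closure (mem_image_of_mem x (Order.lt_succ_of_not_isMax hmax)))

theorem discreteTopology_range (hx : IsFreeSequence x) : DiscreteTopology (range x) := by
  rw [discreteTopology_subtype_iff']
  rintro _ ⟨w, rfl⟩
  refine ⟨(closure (x '' Iio w) ∪ closure (x '' Ioi w))ᶜ,
    (isClosed_closure.union isClosed_closure).isOpen_compl, Subset.antisymm ?_ ?_⟩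
  · rintro _ ⟨hv, v, rfl⟩
    rcases lt_trichotomy v w with hvw | rfl | hwv
    · exact absurd (.inl (subset_closure (mem_image_of_mem x hvw))) hv
    · rfl
    · exact absurd (.inr (subset_closure (mem_image_of_mem x hwv))) hv
  · rintro _ rfl
    exact ⟨not_or.2 ⟨hx.notMem_closure_image_Iio w, hx.notMem_closure_image_Ioi w⟩,
      mem_range_self w⟩

end Discrete

variable {X W : Type u} [TopologicalSpace X] [LinearOrder W] {κ : Cardinal.{u}} {x : W → X}

theorem iInter_closure_image_Ici_eq_empty (hx : IsFreeSequence x) (hX : CharacterLE X κ)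
    (hW : κ < Order.cof W) : ⋂ w, closure (x '' Ici w) = ∅ := by
  rw [eq_empty_iff_forall_notMem]
  intro y hy
  rw [mem_iInter] at hy
  obtain ⟨w₀⟩ : Nonempty W := Order.cof_ne_zero_iff.1 (zero_le.trans_lt hW).ne'
  obtain ⟨A, hAx, hAκ, hyA⟩ :=
    hX.exists_subset_mk_le_mem_closure (closure_mono (image_subset_range x _) (hy w₀))
  rw [← iUnion_singleton_eq_range] at hAx
  obtain ⟨w, hw⟩ := exists_subset_biUnion_Iio_of_mk_lt_cof (hAκ.trans_lt hW) hAx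
  rw [← image_eq_iUnion] at hw
  exact (hx w).notMem_of_mem_left (closure_mono hw hyA) (hy w)

theorem not_range_subset_of_isLindelof (hx : IsFreeSequence x) (hX : CharacterLE X κ)
    (hκ : ℵ₀ ≤ κ) (hW : κ < Order.cof W) {Y : Set X} (hY : IsLindelof Y) : ¬ range x ⊆ Y := by
  intro hxY
  obtain ⟨S, hScount, hS⟩ := hY.elim_countable_subfamily_closed
    (fun w => closure (x '' Ici w)) (fun _ => isClosed_closure)
    (by rw [hx.iInter_closure_image_Ici_eq_empty hX hW, inter_empty])
  obtain ⟨w, hw⟩ := exists_forall_mem_lt_of_mk_lt_cof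
    (((mk_le_aleph0_iff.2 hScount.to_subtype).trans hκ).trans_lt hW)
  have hxw : x w ∈ ⋂ v ∈ S, closure (x '' Ici v) :=
    mem_iInter₂.2 fun v hv => subset_closure (mem_image_of_mem x (hw v hv).le)
  exact hS.subset ⟨hxY (mem_range_self w), hxw⟩

end IsFreeSequence

namespace AlmostDiscretelyLindelof

variable {X : Type u} [TopologicalSpace X] {κ : Cardinal.{u}}

theorem mk_le_two_power_of_discreteTopology [T2Space X] (hADL : AlmostDiscretelyLindelof X)
    (hX : CharacterLE X κ) (hκ : ℵ₀ ≤ κ) {D : Set X} (hD : DiscreteTopology D) :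
    #D ≤ 2 ^ κ := by
  obtain ⟨Y, hDY, hY⟩ := hADL D hD
  have : LindelofSpace Y := isLindelof_iff_lindelofSpace.1 hY
  exact (mk_le_mk_of_subset hDY).trans ((hX.subtype Y).mk_le_two_power_of_lindelofSpace hκ)

theorem not_isFreeSequence (hADL : AlmostDiscretelyLindelof X) (hX : CharacterLE X κ)
    (hκ : ℵ₀ ≤ κ) {W : Type u} [LinearOrder W] [WellFoundedLT W] (hW : κ < Order.cof W)
    (x : W → X) : ¬ IsFreeSequence x := by
  intro hx
  obtain ⟨Y, hxY, hY⟩ := hADL (range x) hx.discreteTopology_range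
  exact hx.not_range_subset_of_isLindelof hX hκ hW hY hxY

end AlmostDiscretelyLindelof

/-- **Shapirovskii's lemma**. -/
theorem exists_discreteTopology_subset_closure_union {X : Type*} [TopologicalSpace X] (S : Set X)
    {U : X → Set X} (hU : ∀ x ∈ S, U x ∈ 𝓝 x) :
    ∃ D ⊆ S, DiscreteTopology D ∧ S ⊆ closure D ∪ ⋃ q ∈ D, U q := by
  obtain ⟨_, _⟩ := exists_wellFoundedLT X
  -- Greedily keep each point of `S` that is not covered by the points kept before it.
  obtain ⟨D, hD⟩ := exists_set_forall_mem_iff_inter_Iio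
    fun E x => x ∈ S ∧ x ∉ closure E ∪ ⋃ q ∈ E, U q
  refine ⟨D, fun x hx => ((hD x).1 hx).1, ?_, fun x hx => ?_⟩
  · rw [discreteTopology_subtype_iff']
    intro q hq
    obtain ⟨hqS, hqnew⟩ := (hD q).1 hq
    refine ⟨interior (U q) \ closure (D ∩ Iio q), isOpen_interior.sdiff isClosed_closure,
      Subset.antisymm ?_ ?_⟩
    · rintro r ⟨⟨hrU, hrclosure⟩, hr⟩
      rcases lt_trichotomy r q with hrq | rfl | hqr
      · exact (hrclosure (subset_closure ⟨hr, hrq⟩)).elim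
      · rfl
      · exact (((hD r).1 hr).2 (.inr (mem_biUnion ⟨hq, hqr⟩ (interior_subset hrU)))).elim
    · rintro _ rfl
      exact ⟨⟨mem_interior_iff_mem_nhds.2 (hU _ hqS), fun h => hqnew (.inl h)⟩, hq⟩
  · by_contra hxnew
    have hearlier : D ∩ Iio x ⊆ D := inter_subset_left
    have hxD : x ∈ D := (hD x).2 ⟨hx, fun h => hxnew (union_subset_union
      (closure_mono hearlier) (biUnion_subset_biUnion_left hearlier) h)⟩
    exact hxnew (.inl (subset_closure hxD))

theorem exists_discreteTopology_forall_notMem_isClosed {X : Type*} [TopologicalSpace X]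
    [RegularSpace X] {B : X → Set (Set X)} (hB : ∀ x, (𝓝 x).HasBasis (· ∈ B x) id) {K : Set X}
    (hK : IsClosed K) :
    ∃ D : Set X, DiscreteTopology D ∧
      ∀ x ∉ K, x ∈ closure D ∨ ∃ q ∈ D, ∃ V ∈ B q, x ∈ V ∧ Disjoint K (closure V) := by
  have hsep (q : X) (hq : q ∈ Kᶜ) : ∃ V ∈ B q, Disjoint K (closure V) := by
    obtain ⟨V, hV, hVK⟩ := (hB q).nhds_closure.mem_iff.1 (hK.isOpen_compl.mem_nhds hq)
    exact ⟨V, hV, disjoint_left.2 fun y hyK hyV => hVK hyV hyK⟩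
  choose! V hVB hVK using hsep
  obtain ⟨D, hDK, hDdiscrete, hcover⟩ := exists_discreteTopology_subset_closure_union Kᶜ
    fun q hq => (hB q).mem_of_mem (hVB q hq)
  refine ⟨D, hDdiscrete, fun x hx => (hcover hx).imp_right fun hxV => ?_⟩
  obtain ⟨q, hq, hxq⟩ := mem_iUnion₂.1 hxV
  exact ⟨q, hq, V q, hVB q (hDK hq), hxq, hVK q (hDK hq)⟩

section

variable {X W : Type u} [TopologicalSpace X] {κ : Cardinal.{u}} [LinearOrder W] [WellFoundedLT W]

theorem exists_isFreeSequence (hκ : ℵ₀ ≤ κ) (hW : ∀ w : W, #(Iio w) ≤ κ) {F : Set X}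
    {𝒵 : Set (Set X)} (hclosed : ∀ Z ∈ 𝒵, IsClosed Z)
    (hsep : ∀ A ⊆ F, #A ≤ κ → ∃ Z ∈ 𝒵, Disjoint (closure A) Z)
    (hmeet : ∀ 𝒜 ⊆ 𝒵, #𝒜 ≤ κ → (⋂₀ 𝒜 ∩ F).Nonempty) :
    ∃ x : W → X, IsFreeSequence x := by
  -- Each term carries a closed set that will contain the whole tail starting there.
  have hnext (S : Set (X × Set X)) (hS : S ⊆ F ×ˢ 𝒵) (hSκ : #S ≤ κ) :
      ∃ y ∈ F ×ˢ 𝒵, Disjoint (closure (Prod.fst '' S)) y.2 ∧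
        y.1 ∈ ⋂₀ insert y.2 (Prod.snd '' S) := by
    obtain ⟨Z, hZ, hdisj⟩ := hsep (Prod.fst '' S) (image_subset_iff.2 fun y hy => (hS hy).1)
      (mk_image_le.trans hSκ)
    obtain ⟨x, hx, hxF⟩ := hmeet (insert Z (Prod.snd '' S))
      (insert_subset hZ (image_subset_iff.2 fun y hy => (hS hy).2))
      (mk_insert_le.trans (add_le_of_le hκ (mk_image_le.trans hSκ) (one_le_aleph0.trans hκ)))
    exact ⟨(x, Z), ⟨hxF, hZ⟩, hdisj, hx⟩
  obtain ⟨s, hs⟩ := exists_seq_forall_rel_image_Iio hW hnext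
  refine ⟨fun w => (s w).1, fun w => ?_⟩
  have htail : closure ((fun w => (s w).1) '' Ici w) ⊆ (s w).2 := by
    refine closure_minimal (image_subset_iff.2 fun v hwv => ?_) (hclosed _ (hs w).1.2)
    rcases eq_or_lt_of_le hwv with rfl | hlt
    · exact (hs w).2.2 _ (mem_insert _ _)
    · exact (hs v).2.2 _ (mem_insert_of_mem _ (mem_image_of_mem _ (mem_image_of_mem s hlt)))
  have hinitial := (hs w).2.1
  rw [image_image] at hinitial
  exact hinitial.mono_right htail

theorem CharacterLE.mk_le_two_power_of_forall_not_isFreeSequence [T3Space X]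
    (hX : CharacterLE X κ) (hκ : ℵ₀ ≤ κ)
    (hdiscrete : ∀ D : Set X, DiscreteTopology D → #D ≤ 2 ^ κ)
    (hW : ∀ w : W, #(Iio w) ≤ κ) (hfree : ∀ x : W → X, ¬ IsFreeSequence x) : #X ≤ 2 ^ κ := by
  choose B hBκ hB using id hX
  choose D hDdiscrete hD using fun A : Set X =>
    exists_discreteTopology_forall_notMem_isClosed hB (isClosed_closure (s := A))
  obtain ⟨F, hFclosed, hFcard, hreflects, hFD⟩ :=
    hX.exists_isClosed_reflectsIntersections_closed_off hκ (𝒞 := fun x => closure '' B x)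
      (fun x => mk_image_le.trans (hBκ x)) fun A _ => hdiscrete (D A) (hDdiscrete A)
  suffices hF : F = Set.univ by rwa [hF, mk_univ] at hFcard
  by_contra hne
  obtain ⟨p, hp⟩ := (ne_univ_iff_exists_notMem F).1 hne
  let 𝒵 : Set (Set X) := {Z | Z ∈ ⋃ q ∈ F, closure '' B q ∧ p ∈ Z}
  have hclosed (Z : Set X) (hZ : Z ∈ 𝒵) : IsClosed Z := by
    obtain ⟨q, -, V, -, rfl⟩ := mem_iUnion₂.1 hZ.1
    exact isClosed_closure
  have hsep (A : Set X) (hA : A ⊆ F) (hAκ : #A ≤ κ) : ∃ Z ∈ 𝒵, Disjoint (closure A) Z := by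
    have hDF : D A ⊆ F := hFD A hA hAκ
    rcases hD A p fun h => hp (closure_minimal hA hFclosed h) with hpD | ⟨q, hq, V, hV, hpV, hdisj⟩
    · exact absurd (closure_minimal hDF hFclosed hpD) hp
    · exact ⟨closure V, ⟨mem_biUnion (hDF hq) (mem_image_of_mem _ hV), subset_closure hpV⟩, hdisj⟩
  obtain ⟨x, hx⟩ := exists_isFreeSequence (W := W) hκ hW hclosed hsep fun 𝒜 h𝒜 h𝒜κ =>
    hreflects 𝒜 (fun Z hZ => (h𝒜 hZ).1) h𝒜κ ⟨p, fun Z hZ => (h𝒜 hZ).2⟩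
  exact hfree x hx

end

theorem almostDiscretelyLindelof_card_le_of_character
    {X : Type u} [TopologicalSpace X] [T3Space X] (κ : Cardinal.{u})
    (hκ : ℵ₀ ≤ κ)
    (hADL : AlmostDiscretelyLindelof X)
    (hχ : ∀ x : X, ∃ B : Set (Set X), #B ≤ κ ∧ (∀ b ∈ B, b ∈ 𝓝 x) ∧
      ∀ s ∈ 𝓝 x, ∃ b ∈ B, b ⊆ s) :
    #X ≤ 2 ^ κ := by
  have hX : CharacterLE X κ := fun x =>
    let ⟨B, hBκ, hBnhds, hBbasis⟩ := hχ x
    ⟨B, hBκ, hasBasis_iff.2 fun s =>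
      ⟨hBbasis s, fun ⟨b, hb, hbs⟩ => mem_of_superset (hBnhds b hb) hbs⟩⟩
  exact hX.mk_le_two_power_of_forall_not_isFreeSequence hκ
    (fun _ => hADL.mk_le_two_power_of_discreteTopology hX hκ) mk_Iio_toType_ord_succ_le
    (hADL.not_isFreeSequence hX hκ (lt_cof_toType_ord_succ hκ))
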